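/- arXiv:1902.06077 — 4 statements merged into one kernel-verified Lean document; each statement's English description precedes it below -/
import Mathlib

section
/- Let (a_k)_{k≥1} be a sequence of complex numbers with Σ_{k≥1}|a_k|·log(k+1) < ∞. Then the odd discrete Hilbert transform of a is summable: Σ_{n≥1}|ℏᵒa(n)| < ∞. -/
/-- The odd discrete Hilbert transform
`ℏᵒa(n) = Σ_{k≥1, k≠n} 2k·a_k/(n² − k²) − a_n/(2n)`. -/
noncomputable def hbarO (a : ℕ → ℂ) (n : ℕ) : ℂ :=
  (∑' k : ℕ, if 1 ≤ k ∧ k ≠ n then 2 * (k : ℂ) * a k / ((n : ℂ) ^ 2 - (k : ℂ) ^ 2) else 0)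
    - a n / (2 * (n : ℂ))

/-!
By partial fractions `2k / (n² - k²) = 1 / (n - k) - 1 / (n + k)`, so the `k`-th column of the
matrix of `ℏᵒ` telescopes: its `ℓ¹` norm over `n ≥ 1` is exactly `2 H_{2k} - 1 / k`, where `H` is
the harmonic sequence. This is `O(log (k + 1))`, and Fubini for absolutely summable double series
turns the bound on the columns into summability of the transform.
-/

open Filter Finset Topology

section DoubleSeries

variable {ι κ E : Type*} [NormedAddCommGroup E]

theorem summable_norm_tsum_of_summable_norm_prod {f : ι × κ → E}
    (hf : Summable fun p => ‖f p‖) : Summable fun i => ‖∑' k, f (i, k)‖ := by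
  obtain ⟨rows_summable, row_norms_summable⟩ :=
    (summable_prod_of_nonneg fun p => norm_nonneg (f p)).1 hf
  exact row_norms_summable.of_nonneg_of_le (fun _ => norm_nonneg _)
    fun i => norm_tsum_le_tsum_norm (rows_summable i)

theorem summable_norm_smul_prod_of_hasSum {𝕜 : Type*} [NormedField 𝕜] [NormedSpace 𝕜 E]
    {A : ι → κ → 𝕜} {x : κ → E} {c : κ → ℝ} (hA : ∀ k, HasSum (fun i => ‖A i k‖) (c k))
    (hx : Summable fun k => c k * ‖x k‖) :
    Summable fun p : ι × κ => ‖A p.1 p.2 • x p.2‖ := by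
  have column_hasSum (k : κ) : HasSum (fun i => ‖A i k • x k‖) (c k * ‖x k‖) := by
    simpa only [norm_smul] using (hA k).mul_right ‖x k‖
  have transpose_summable : Summable fun p : κ × ι => ‖A p.2 p.1 • x p.1‖ := by
    rw [summable_prod_of_nonneg fun _ => norm_nonneg _]
    exact ⟨fun k => (column_hasSum k).summable, by simpa only [(column_hasSum _).tsum_eq] using hx⟩
  exact transpose_summable.prod_symm

end DoubleSeries

theorem sum_range_sub_shift {G : Type*} [AddCommGroup G] (f : ℕ → G) (L M : ℕ) :
    ∑ i ∈ range M, (f i - f (i + L)) = ∑ i ∈ range L, f i - ∑ i ∈ range L, f (M + i) := by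
  have split_at_M := sum_range_add f M L
  have split_at_L := sum_range_add f L M
  rw [add_comm L M, split_at_M] at split_at_L
  simp only [add_comm L] at split_at_L
  rw [sum_sub_distrib, sub_eq_sub_iff_add_eq_add, split_at_L]

theorem hasSum_sub_shift_of_antitone {f : ℕ → ℝ} (hf : Antitone f)
    (hf₀ : Tendsto f atTop (𝓝 0)) (L : ℕ) :
    HasSum (fun i => f i - f (i + L)) (∑ i ∈ range L, f i) := by
  rw [hasSum_iff_tendsto_nat_of_nonneg fun i => sub_nonneg.2 (hf (i.le_add_right L))]
  simp only [sum_range_sub_shift]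
  have remainder_tendsto : Tendsto (fun M => ∑ i ∈ range L, f (M + i)) atTop (𝓝 0) := by
    simpa using tendsto_finsetSum (range L) fun i _ => hf₀.comp (tendsto_add_atTop_nat i)
  simpa using remainder_tendsto.const_sub (∑ i ∈ range L, f i)

theorem cast_harmonic_eq_sum_range (n : ℕ) :
    (harmonic n : ℝ) = ∑ i ∈ range n, ((i : ℝ) + 1)⁻¹ := by
  simp [harmonic]

theorem hasSum_inv_sub_inv_shift (L : ℕ) :
    HasSum (fun i : ℕ => ((i : ℝ) + 1)⁻¹ - ((i : ℝ) + L + 1)⁻¹) (harmonic L) := by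
  have inv_antitone : Antitone fun i : ℕ => ((i : ℝ) + 1)⁻¹ := fun i j hij => by
    dsimp only
    gcongr
  have inv_tendsto : Tendsto (fun i : ℕ => ((i : ℝ) + 1)⁻¹) atTop (𝓝 0) := by
    simpa only [one_div] using tendsto_one_div_add_atTop_nhds_zero_nat (𝕜 := ℝ)
  simpa only [cast_harmonic_eq_sum_range, Nat.cast_add] using
    hasSum_sub_shift_of_antitone inv_antitone inv_tendsto L

theorem harmonic_two_mul_le_four_mul_log (k : ℕ) :
    (harmonic (2 * k) : ℝ) ≤ 4 * Real.log (k + 1) := by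
  rcases k.eq_zero_or_pos with rfl | hk
  · simp
  have hk' : (1 : ℝ) ≤ k := by exact_mod_cast hk
  have one_le_two_mul_log : 1 ≤ 2 * Real.log (k + 1) := by
    have log_two_le : Real.log 2 ≤ Real.log (k + 1) := Real.log_le_log two_pos (by linarith)
    linarith [Real.log_two_gt_d9]
  calc (harmonic (2 * k) : ℝ) ≤ 1 + Real.log (2 * k) := by
        exact_mod_cast harmonic_le_one_add_log (2 * k)
    _ ≤ 1 + Real.log ((k + 1) ^ 2) := by
        gcongr
        nlinarith
    _ ≤ 4 * Real.log (k + 1) := by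
        rw [Real.log_pow]
        push_cast
        linarith

/-- The matrix of the odd discrete Hilbert transform in partial fractions. Because `0⁻¹ = 0`, this
formula also gives the diagonal entries `-1 / (2n)` and a zero column at `k = 0`. -/
noncomputable def oddHilbertKernel (n k : ℕ) : ℝ :=
  ((n : ℝ) - k)⁻¹ - ((n : ℝ) + k)⁻¹

theorem oddHilbertKernel_self (n : ℕ) : oddHilbertKernel n n = -(2 * (n : ℝ))⁻¹ := by
  simp [oddHilbertKernel, two_mul]

theorem oddHilbertKernel_zero_right (n : ℕ) : oddHilbertKernel n 0 = 0 := by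
  simp [oddHilbertKernel]

theorem oddHilbertKernel_of_ne {n k : ℕ} (h : n ≠ k) :
    oddHilbertKernel n k = 2 * k / ((n : ℝ) ^ 2 - (k : ℝ) ^ 2) := by
  have cast_sub_ne_zero : (n : ℝ) - k ≠ 0 := sub_ne_zero.2 (by exact_mod_cast h)
  have cast_add_ne_zero : (n : ℝ) + k ≠ 0 := by
    have : n + k ≠ 0 := by omega
    exact_mod_cast this
  rw [oddHilbertKernel, inv_sub_inv cast_sub_ne_zero cast_add_ne_zero]
  ring

theorem abs_oddHilbertKernel_of_le {n k : ℕ} (h : n ≤ k) :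
    |oddHilbertKernel n k| = ((k : ℝ) - n)⁻¹ + ((n : ℝ) + k)⁻¹ := by
  have h' : (0 : ℝ) ≤ k - n := sub_nonneg.2 (by exact_mod_cast h)
  have neg_eq : oddHilbertKernel n k = -(((k : ℝ) - n)⁻¹ + ((n : ℝ) + k)⁻¹) := by
    rw [oddHilbertKernel, ← neg_sub (k : ℝ) n, inv_neg]
    ring
  rw [neg_eq, abs_neg, abs_of_nonneg (by positivity)]

theorem abs_oddHilbertKernel_add_succ (i k : ℕ) :
    |oddHilbertKernel (i + k + 1) k| = ((i : ℝ) + 1)⁻¹ - ((i : ℝ) + (2 * k : ℕ) + 1)⁻¹ := by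
  have kernel_eq : oddHilbertKernel (i + k + 1) k
      = ((i : ℝ) + 1)⁻¹ - ((i : ℝ) + (2 * k : ℕ) + 1)⁻¹ := by
    rw [oddHilbertKernel]
    push_cast
    congr 2 <;> ring
  rw [kernel_eq, abs_of_nonneg]
  rw [sub_nonneg]
  gcongr
  simp

theorem sum_range_abs_oddHilbertKernel_succ (k : ℕ) :
    ∑ n ∈ range k, |oddHilbertKernel (n + 1) k| = harmonic (2 * k) - (k : ℝ)⁻¹ := by
  have entry_eq : ∀ n ∈ range k, |oddHilbertKernel (n + 1) k|
      = ((k - 1 - n : ℕ) : ℝ)⁻¹ + (((k + n : ℕ) : ℝ) + 1)⁻¹ := fun n hn => by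
    have succ_le : n + 1 ≤ k := mem_range.1 hn
    rw [abs_oddHilbertKernel_of_le succ_le, Nat.sub_sub, add_comm 1 n, Nat.cast_sub succ_le]
    push_cast
    ring
  have sum_inv_sub : ∑ n ∈ range k, ((k - 1 - n : ℕ) : ℝ)⁻¹ = harmonic k - (k : ℝ)⁻¹ := by
    rw [sum_range_reflect (fun n : ℕ => (n : ℝ)⁻¹), eq_sub_iff_add_eq, ← sum_range_succ,
      sum_range_succ', cast_harmonic_eq_sum_range]
    simp
  have sum_inv_add : ∑ n ∈ range k, (((k + n : ℕ) : ℝ) + 1)⁻¹ = harmonic (2 * k) - harmonic k := by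
    rw [eq_sub_iff_add_eq', two_mul, cast_harmonic_eq_sum_range, cast_harmonic_eq_sum_range,
      sum_range_add]
  rw [sum_congr rfl entry_eq, sum_add_distrib, sum_inv_sub, sum_inv_add]
  ring

theorem hasSum_abs_oddHilbertKernel_succ (k : ℕ) :
    HasSum (fun n => |oddHilbertKernel (n + 1) k|) (2 * harmonic (2 * k) - (k : ℝ)⁻¹) := by
  rw [← hasSum_nat_add_iff' k, sum_range_abs_oddHilbertKernel_succ]
  simp only [abs_oddHilbertKernel_add_succ]
  rw [sub_sub_sub_cancel_right, two_mul (harmonic (2 * k) : ℝ), add_sub_cancel_right]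
  exact hasSum_inv_sub_inv_shift (2 * k)

theorem hbarO_eq_tsum_oddHilbertKernel {a : ℕ → ℂ} {n : ℕ}
    (h : Summable fun k => oddHilbertKernel n k • a k) :
    hbarO a n = ∑' k, oddHilbertKernel n k • a k := by
  have diagonal : oddHilbertKernel n n • a n = -(a n / (2 * (n : ℂ))) := by
    rw [oddHilbertKernel_self, Complex.real_smul]
    push_cast
    ring
  have off_diagonal (k : ℕ) : (if k = n then 0 else oddHilbertKernel n k • a k)
      = if 1 ≤ k ∧ k ≠ n then 2 * (k : ℂ) * a k / ((n : ℂ) ^ 2 - (k : ℂ) ^ 2) else 0 := by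
    rcases eq_or_ne k n with rfl | hkn
    · simp
    rcases k.eq_zero_or_pos with rfl | hk
    · simp [oddHilbertKernel_zero_right]
    rw [if_neg hkn, if_pos ⟨hk, hkn⟩, oddHilbertKernel_of_ne hkn.symm, Complex.real_smul]
    push_cast
    ring
  rw [h.tsum_eq_add_tsum_ite n, diagonal, tsum_congr off_diagonal, hbarO]
  ring

theorem summable_norm_oddHilbertKernel_succ_smul {E : Type*} [NormedAddCommGroup E]
    [NormedSpace ℝ E] {x : ℕ → E} (hx : Summable fun k : ℕ => ‖x k‖ * Real.log (k + 1)) :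
    Summable fun p : ℕ × ℕ => ‖oddHilbertKernel (p.1 + 1) p.2 • x p.2‖ := by
  have column_nonneg (k : ℕ) : 0 ≤ 2 * harmonic (2 * k) - (k : ℝ)⁻¹ :=
    (hasSum_abs_oddHilbertKernel_succ k).nonneg fun _ => abs_nonneg _
  have column_le (k : ℕ) : 2 * harmonic (2 * k) - (k : ℝ)⁻¹ ≤ 8 * Real.log (k + 1) := by
    linarith [harmonic_two_mul_le_four_mul_log k, inv_nonneg.2 (k.cast_nonneg (α := ℝ))]
  have columns_summable :
      Summable fun k : ℕ => (2 * harmonic (2 * k) - (k : ℝ)⁻¹) * ‖x k‖ := by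
    refine (hx.mul_left 8).of_nonneg_of_le
      (fun k => mul_nonneg (column_nonneg k) (norm_nonneg _)) fun k => ?_
    calc (2 * harmonic (2 * k) - (k : ℝ)⁻¹) * ‖x k‖ ≤ 8 * Real.log (k + 1) * ‖x k‖ := by
          gcongr
          exact column_le k
      _ = 8 * (‖x k‖ * Real.log (k + 1)) := by ring
  exact summable_norm_smul_prod_of_hasSum (A := fun n k => oddHilbertKernel (n + 1) k)
    hasSum_abs_oddHilbertKernel_succ columns_summable

/-- if `Σ_{k≥1} |a_k| log(k+1) < ∞` then the odd discrete Hilbert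
transform of `a` is summable. -/
theorem stmt_7 (a : ℕ → ℂ)
    (ha : Summable fun k : ℕ => ‖a (k + 1)‖ * Real.log ((k : ℝ) + 2)) :
    Summable fun n : ℕ => ‖hbarO a (n + 1)‖ := by
  have weighted_summable : Summable fun k : ℕ => ‖a k‖ * Real.log (k + 1) := by
    rw [← summable_nat_add_iff 1]
    simpa only [Nat.cast_add_one, add_assoc, one_add_one_eq_two] using ha
  have entries_summable := summable_norm_oddHilbertKernel_succ_smul weighted_summable
  have hbarO_eq (n : ℕ) : hbarO a (n + 1) = ∑' k, oddHilbertKernel (n + 1) k • a k :=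
    hbarO_eq_tsum_oddHilbertKernel (entries_summable.of_norm.prod_factor n)
  simpa only [hbarO_eq] using summable_norm_tsum_of_summable_norm_prod entries_summable
end

section
/- Let (a_k)_{k≥1} be a sequence of complex numbers with Σ_{k≥1}|a_k|·log(k+1) < ∞ and Σ_{k≥1} a_k = 0. Then the even discrete Hilbert transform of a is summable: Σ_{n≥1}|ℏᵉa(n)| < ∞. -/
/-- The even discrete Hilbert transform
`ℏᵉa(n) = Σ_{k≥1, k≠n} 2n·a_k/(n² − k²) + a_n/(2n)`. -/
noncomputable def hbarE (a : ℕ → ℂ) (n : ℕ) : ℂ :=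
  (∑' k : ℕ, if 1 ≤ k ∧ k ≠ n then 2 * (n : ℂ) * a k / ((n : ℂ) ^ 2 - (k : ℂ) ^ 2) else 0)
    + a n / (2 * (n : ℂ))

/-!
The kernel of `ℏᵉ` is `1 / (n - k) + 1 / (n + k)`, where the first summand is dropped for `k = n`.
It decays like `2 / n`, which is not summable over `n`; since `∑ a k = 0`, subtracting `2 / n` from
it does not change the transform. The `k`-th column of the centered kernel has absolute sum at most
`4 * harmonic k = O(log (k + 1))`: the terms `n ≤ k` are bounded by `2 / n + 1 / (k - n)`, the terms
`n > k` by the telescoping differences `1 / (n - k) - 1 / n`. Exchanging the order of summation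
concludes.
-/

open Finset

section ColumnSums

variable {ι κ 𝕜 E : Type*} [NormedField 𝕜] [SeminormedAddCommGroup E] [NormedSpace 𝕜 E]

theorem summable_norm_smul_prod_of_tsum_norm_le {K : κ → ι → 𝕜} {a : ι → E} {w : ι → ℝ}
    (hK : ∀ k, Summable fun n => ‖K n k‖) (hw : ∀ k, ∑' n, ‖K n k‖ ≤ w k)
    (ha : Summable fun k => w k * ‖a k‖) :
    Summable fun p : κ × ι => ‖K p.1 p.2 • a p.2‖ := by
  suffices h : Summable fun p : ι × κ => ‖K p.2 p.1 • a p.1‖ from h.prod_symm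
  rw [summable_prod_of_nonneg fun _ => norm_nonneg _]
  simp only [norm_smul, tsum_mul_right]
  refine ⟨fun k => (hK k).mul_right _, ?_⟩
  exact ha.of_nonneg_of_le
    (fun k => mul_nonneg (tsum_nonneg fun _ => norm_nonneg _) (norm_nonneg _))
    fun k => mul_le_mul_of_nonneg_right (hw k) (norm_nonneg _)

theorem summable_norm_tsum_smul_of_tsum_norm_le {K : κ → ι → 𝕜} {a : ι → E} {w : ι → ℝ}
    (hK : ∀ k, Summable fun n => ‖K n k‖) (hw : ∀ k, ∑' n, ‖K n k‖ ≤ w k)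
    (ha : Summable fun k => w k * ‖a k‖) :
    Summable fun n => ‖∑' k, K n k • a k‖ := by
  have prod_summable := summable_norm_smul_prod_of_tsum_norm_le hK hw ha
  rw [summable_prod_of_nonneg fun _ => norm_nonneg _] at prod_summable
  obtain ⟨row_summable, rowSums_summable⟩ := prod_summable
  exact rowSums_summable.of_nonneg_of_le (fun _ => norm_nonneg _)
    fun n => norm_tsum_le_tsum_norm (row_summable n)

end ColumnSums

section Harmonic

theorem sum_range_inv_add_one (n : ℕ) :
    ∑ i ∈ range n, ((i : ℝ) + 1)⁻¹ = harmonic n := by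
  simp [harmonic]

-- The extra term, `i = 0` here and `i = n` in the reflected sum, is `0⁻¹ = 0`.
theorem sum_range_succ_inv (n : ℕ) : ∑ i ∈ range (n + 1), (i : ℝ)⁻¹ = harmonic n := by
  simp [sum_range_succ', harmonic]

theorem sum_range_succ_inv_sub (n : ℕ) :
    ∑ i ∈ range (n + 1), ((n : ℝ) - i)⁻¹ = harmonic n := by
  rw [← sum_range_succ_inv, ← sum_range_reflect (fun i : ℕ => (i : ℝ)⁻¹)]
  refine sum_congr rfl fun i hi => ?_
  rw [Nat.add_sub_cancel, Nat.cast_sub (mem_range_succ_iff.1 hi)]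

theorem monotone_harmonic_cast : Monotone fun n => (harmonic n : ℝ) :=
  monotone_nat_of_le_succ fun n => by
    rw [harmonic_succ]
    push_cast
    exact le_add_of_nonneg_right (by positivity)

theorem sum_range_inv_add_one_sub_inv_le (k N : ℕ) :
    ∑ m ∈ range N, (((m : ℝ) + 1)⁻¹ - ((k + m : ℝ) + 1)⁻¹) ≤ harmonic k := by
  have split : (harmonic (k + N) : ℝ) = harmonic k + ∑ m ∈ range N, ((k + m : ℝ) + 1)⁻¹ := by
    simp only [← sum_range_inv_add_one, sum_range_add, Nat.cast_add]
  have mono : (harmonic N : ℝ) ≤ harmonic (k + N) := monotone_harmonic_cast (Nat.le_add_left N k)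
  rw [sum_sub_distrib, sum_range_inv_add_one]
  linarith

theorem one_le_two_mul_log {x : ℝ} (hx : 2 ≤ x) : 1 ≤ 2 * Real.log x := by
  have log_two_le : Real.log 2 ≤ Real.log x := Real.log_le_log two_pos hx
  linarith [Real.log_two_gt_d9]

theorem harmonic_le_three_mul_log_add_one (n : ℕ) :
    (harmonic n : ℝ) ≤ 3 * Real.log ((n : ℝ) + 1) := by
  rcases n.eq_zero_or_pos with rfl | hn
  · simp
  have one_le : (1 : ℝ) ≤ n := by exact_mod_cast hn
  calc (harmonic n : ℝ) ≤ 1 + Real.log n := harmonic_le_one_add_log n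
    _ ≤ 2 * Real.log ((n : ℝ) + 1) + Real.log ((n : ℝ) + 1) :=
        add_le_add (one_le_two_mul_log (by linarith))
          (Real.log_le_log (by linarith) (by linarith))
    _ = 3 * Real.log ((n : ℝ) + 1) := by ring

end Harmonic

/-- The kernel of the even discrete Hilbert transform in partial fractions. Since `0⁻¹ = 0`, the
diagonal value is `1 / (2 * n)`, in agreement with the separate term `a n / (2 * n)` of `hbarE`. -/
noncomputable def evenHilbertKernel (n k : ℕ) : ℝ :=
  ((n : ℝ) - k)⁻¹ + ((n : ℝ) + k)⁻¹

/-- The even Hilbert kernel minus its leading term `2 / n` as `n → ∞`; on sequences with sum zero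
both kernels define the same transform. -/
noncomputable def centeredEvenHilbertKernel (n k : ℕ) : ℝ :=
  evenHilbertKernel n k - 2 * (n : ℝ)⁻¹

section Kernel

theorem evenHilbertKernel_self (n : ℕ) : evenHilbertKernel n n = (2 * (n : ℝ))⁻¹ := by
  simp [evenHilbertKernel, two_mul]

theorem evenHilbertKernel_of_ne {n k : ℕ} (h : k ≠ n) :
    evenHilbertKernel n k = 2 * n / ((n : ℝ) ^ 2 - (k : ℝ) ^ 2) := by
  have sub_ne : (n : ℝ) - k ≠ 0 := sub_ne_zero.2 (by exact_mod_cast h.symm)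
  have add_ne : (n : ℝ) + k ≠ 0 := by exact_mod_cast (by lia : n + k ≠ 0)
  rw [evenHilbertKernel, inv_add_inv sub_ne add_ne, sq_sub_sq]
  ring

theorem abs_inv_intCast_le_one (z : ℤ) : |(z : ℝ)⁻¹| ≤ 1 := by
  rcases eq_or_ne z 0 with rfl | hz
  · simp
  rw [abs_inv]
  exact inv_le_one_of_one_le₀ (by exact_mod_cast Int.one_le_abs hz)

theorem abs_evenHilbertKernel_le_two (n k : ℕ) : |evenHilbertKernel n k| ≤ 2 := by
  have sub_le := abs_inv_intCast_le_one ((n : ℤ) - k)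
  have add_le := abs_inv_intCast_le_one ((n : ℤ) + k)
  push_cast at sub_le add_le
  exact (abs_add_le _ _).trans (by linarith)

theorem abs_centeredEvenHilbertKernel_le_of_le {n k : ℕ} (h : n ≤ k) :
    |centeredEvenHilbertKernel n k| ≤ 2 * (n : ℝ)⁻¹ + ((k : ℝ) - n)⁻¹ := by
  rcases n.eq_zero_or_pos with rfl | hn
  · simp [centeredEvenHilbertKernel, evenHilbertKernel]
  have n_pos : (0 : ℝ) < n := by exact_mod_cast hn
  have inv_sub_nonneg : 0 ≤ ((k : ℝ) - n)⁻¹ := inv_nonneg.2 (sub_nonneg.2 (by exact_mod_cast h))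
  have inv_add_nonneg : 0 ≤ ((n : ℝ) + k)⁻¹ := by positivity
  have inv_add_le : ((n : ℝ) + k)⁻¹ ≤ (n : ℝ)⁻¹ := inv_anti₀ n_pos (by simp)
  rw [centeredEvenHilbertKernel, evenHilbertKernel, ← neg_sub (k : ℝ), inv_neg, abs_le]
  constructor <;> linarith

theorem abs_centeredEvenHilbertKernel_le_of_lt {n k : ℕ} (h : k < n) :
    |centeredEvenHilbertKernel n k| ≤ ((n : ℝ) - k)⁻¹ - (n : ℝ)⁻¹ := by
  have n_pos : (0 : ℝ) < n := by exact_mod_cast (Nat.zero_le k).trans_lt h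
  have n_sub_k_pos : (0 : ℝ) < n - k := sub_pos.2 (by exact_mod_cast h)
  have kernel_eq :
      centeredEvenHilbertKernel n k = 2 * (k : ℝ) ^ 2 / (n * ((n - k) * (n + k))) := by
    rw [centeredEvenHilbertKernel, evenHilbertKernel]
    field_simp
    ring
  have kernel_nonneg : 0 ≤ centeredEvenHilbertKernel n k := by
    rw [kernel_eq]
    positivity
  have inv_add_le : ((n : ℝ) + k)⁻¹ ≤ (n : ℝ)⁻¹ := inv_anti₀ n_pos (by simp)
  rw [abs_of_nonneg kernel_nonneg, centeredEvenHilbertKernel, evenHilbertKernel]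
  linarith

theorem sum_range_succ_abs_centeredEvenHilbertKernel_le (k : ℕ) :
    ∑ n ∈ range (k + 1), |centeredEvenHilbertKernel n k| ≤ 3 * harmonic k :=
  calc ∑ n ∈ range (k + 1), |centeredEvenHilbertKernel n k|
    _ ≤ ∑ n ∈ range (k + 1), (2 * (n : ℝ)⁻¹ + ((k : ℝ) - n)⁻¹) :=
        sum_le_sum fun n hn => abs_centeredEvenHilbertKernel_le_of_le (mem_range_succ_iff.1 hn)
    _ = 3 * harmonic k := by
        rw [sum_add_distrib, ← mul_sum, sum_range_succ_inv, sum_range_succ_inv_sub]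
        ring

theorem sum_range_abs_centeredEvenHilbertKernel_add_le (k N : ℕ) :
    ∑ m ∈ range N, |centeredEvenHilbertKernel (k + 1 + m) k| ≤ harmonic k := by
  refine (sum_le_sum fun m _ => ?_).trans (sum_range_inv_add_one_sub_inv_le k N)
  have cast_sub : ((k + 1 + m : ℕ) : ℝ) - k = m + 1 := by push_cast; ring
  have cast_eq : ((k + 1 + m : ℕ) : ℝ) = k + m + 1 := by push_cast; ring
  rw [← cast_sub, ← cast_eq]
  exact abs_centeredEvenHilbertKernel_le_of_lt (by lia)

theorem sum_range_abs_centeredEvenHilbertKernel_le (k N : ℕ) :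
    ∑ n ∈ range N, |centeredEvenHilbertKernel n k| ≤ 4 * harmonic k :=
  calc ∑ n ∈ range N, |centeredEvenHilbertKernel n k|
    _ ≤ ∑ n ∈ range (k + 1 + N), |centeredEvenHilbertKernel n k| :=
        sum_le_sum_of_subset_of_nonneg (range_mono (Nat.le_add_left N _)) fun _ _ _ => abs_nonneg _
    _ ≤ 4 * harmonic k := by
        rw [sum_range_add]
        linarith [sum_range_succ_abs_centeredEvenHilbertKernel_le k,
          sum_range_abs_centeredEvenHilbertKernel_add_le k N]

theorem summable_abs_centeredEvenHilbertKernel (k : ℕ) :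
    Summable fun n => |centeredEvenHilbertKernel n k| :=
  summable_of_sum_range_le (fun _ => abs_nonneg _) (sum_range_abs_centeredEvenHilbertKernel_le k)

theorem tsum_abs_centeredEvenHilbertKernel_le (k : ℕ) :
    ∑' n, |centeredEvenHilbertKernel n k| ≤ 12 * Real.log ((k : ℝ) + 1) := by
  have le_harmonic : ∑' n, |centeredEvenHilbertKernel n k| ≤ 4 * harmonic k :=
    Real.tsum_le_of_sum_range_le (fun _ => abs_nonneg _)
      (sum_range_abs_centeredEvenHilbertKernel_le k)
  linarith [harmonic_le_three_mul_log_add_one k]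

end Kernel

section Transform

variable {a : ℕ → ℂ}

theorem summable_evenHilbertKernel_smul (ha : Summable fun k => ‖a (k + 1)‖) (n : ℕ) :
    Summable fun k => evenHilbertKernel n (k + 1) • a (k + 1) :=
  (ha.mul_left 2).of_norm_bounded fun k => by
    rw [norm_smul]
    exact mul_le_mul_of_nonneg_right (abs_evenHilbertKernel_le_two n _) (norm_nonneg _)

theorem hbarE_eq_tsum_evenHilbertKernel_smul (ha : Summable fun k => ‖a (k + 1)‖) (n : ℕ) :
    hbarE a n = ∑' k, evenHilbertKernel n (k + 1) • a (k + 1) := by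
  let term (k : ℕ) : ℂ := if k = 0 then 0 else evenHilbertKernel n k • a k
  have term_summable : Summable term :=
    (summable_nat_add_iff 1).1 (by simpa [term] using summable_evenHilbertKernel_smul ha n)
  have diagonal : term n = a n / (2 * n) := by
    by_cases hn : n = 0
    · simp [term, hn]
    · simp [term, hn, evenHilbertKernel_self, div_eq_inv_mul]
  have offDiagonal (k : ℕ) :
      (if k = n then 0 else term k) =
        if 1 ≤ k ∧ k ≠ n then 2 * (n : ℂ) * a k / ((n : ℂ) ^ 2 - (k : ℂ) ^ 2) else 0 := by
    by_cases hkn : k = n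
    · simp [hkn]
    by_cases hk : k = 0
    · simp [term, hk]
    · simp [term, hkn, hk, Nat.one_le_iff_ne_zero, evenHilbertKernel_of_ne hkn, div_mul_eq_mul_div]
  calc hbarE a n = term n + ∑' k, if k = n then 0 else term k := by
        rw [hbarE, diagonal, add_comm, tsum_congr offDiagonal]
    _ = ∑' k, term k := (term_summable.tsum_eq_add_tsum_ite n).symm
    _ = ∑' k, evenHilbertKernel n (k + 1) • a (k + 1) := by
        rw [term_summable.tsum_eq_zero_add]
        simp [term]

theorem hbarE_eq_tsum_centeredEvenHilbertKernel_smul (ha : Summable fun k => ‖a (k + 1)‖)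
    (h0 : ∑' k, a (k + 1) = 0) (n : ℕ) :
    hbarE a n = ∑' k, centeredEvenHilbertKernel n (k + 1) • a (k + 1) := by
  simp only [centeredEvenHilbertKernel, sub_smul]
  rw [(summable_evenHilbertKernel_smul ha n).tsum_sub (ha.of_norm.const_smul _),
    ha.of_norm.tsum_const_smul, h0, smul_zero, sub_zero, hbarE_eq_tsum_evenHilbertKernel_smul ha]

end Transform

/-- if `Σ_{k≥1} |a_k| log(k+1) < ∞` and `Σ_{k≥1} a_k = 0`, then the
even discrete Hilbert transform of `a` is summable. -/
theorem stmt_8 (a : ℕ → ℂ)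
    (ha : Summable fun k : ℕ => ‖a (k + 1)‖ * Real.log ((k : ℝ) + 2))
    (h0 : ∑' k : ℕ, a (k + 1) = 0) :
    Summable fun n : ℕ => ‖hbarE a (n + 1)‖ := by
  have a_summable : Summable fun k => ‖a (k + 1)‖ :=
    (ha.mul_left 2).of_nonneg_of_le (fun _ => norm_nonneg _) fun k => by
      have one_le : 1 ≤ 2 * Real.log ((k : ℝ) + 2) := one_le_two_mul_log (by simp)
      linarith [mul_le_mul_of_nonneg_left one_le (norm_nonneg (a (k + 1)))]
  have weighted_summable :
      Summable fun k : ℕ => 12 * Real.log (((k + 1 : ℕ) : ℝ) + 1) * ‖a (k + 1)‖ := by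
    refine (ha.mul_left 12).congr fun k => ?_
    rw [Nat.cast_succ, add_assoc, one_add_one_eq_two]
    ring
  have hbarE_summable : Summable fun n => ‖hbarE a n‖ := by
    simp only [hbarE_eq_tsum_centeredEvenHilbertKernel_smul a_summable h0]
    exact summable_norm_tsum_smul_of_tsum_norm_le
      (fun k => summable_abs_centeredEvenHilbertKernel (k + 1))
      (fun k => tsum_abs_centeredEvenHilbertKernel_le (k + 1)) weighted_summable
  exact (summable_nat_add_iff 1).2 hbarE_summable
end

section
/- Let d ≥ 1, η ∈ {0,1}^d, and let a = (a_k)_{k∈ℕ₊^d} be complex numbers with Σ_k |a_k| < ∞. Define f(x) = Σ_{k∈ℕ₊^d} a_k · (∏_{j:η_j=1} cos(k_j x_j)) · (∏_{j:η_j=0} sin(k_j x_j)) for x ∈ [0,π]^d. Then for every m ∈ ℕ₊^d the re-expansion coefficient b_m := (2/π)^d ∫_{[0,π]^d} f(x) · (∏_{j:η_j=0} cos(m_j x_j)) · (∏_{j:η_j=1} sin(m_j x_j)) dx equals (2/π)^d · ℏ_η⁻a(m), with the defining series converging absolutely. Consequently, Σ_m |b_m| < ∞ if and only if Σ_m |ℏ_η⁻a(m)|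 < ∞. -/
open MeasureTheory

/-- The halved mixed discrete Hilbert transform `ℏ_η⁻a(m)`:
`Σ_{k: k_j−m_j odd ∀j} a_k ∏_{η_j=1}(1/(m_j+k_j)+1/(m_j−k_j)) ∏_{η_j=0}(1/(m_j+k_j)+1/(k_j−m_j))`. -/
noncomputable def hbarMinusMulti {d : ℕ} (η : Fin d → Bool) (a : (Fin d → ℕ) → ℂ)
    (m : Fin d → ℕ) : ℂ :=
  ∑' k : Fin d → ℕ, if ∀ j, 1 ≤ k j ∧ Odd (k j + m j) then
    a k * ∏ j, (if η j then 1 / ((m j : ℂ) + (k j : ℂ)) + 1 / ((m j : ℂ) - (k j : ℂ))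
                else 1 / ((m j : ℂ) + (k j : ℂ)) + 1 / ((k j : ℂ) - (m j : ℂ)))
    else 0

/-!
Absolute summability lets the series be integrated term by term. Each term is a product of
functions of a single variable, so its integral over the cube factors into the integrals
`∫₀^π cos (k x) sin (m x) dx`. Product-to-sum reduces these to `∫₀^π sin (n x) dx`, which is `2 / n`
for odd `n` and `0` for even `n`; since `m + k` and `m - k` have the same parity, this produces the
kernel of `ℏ_η⁻` together with its parity restriction.
-/

section GeneralFacts

lemma hasSum_integral_tsum_mul_of_norm_le {α κ 𝕜 : Type*} [MeasurableSpace α] [Countable κ]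
    [RCLike 𝕜] {μ : Measure α} [IsFiniteMeasure μ] {c : κ → 𝕜} (hc : Summable fun k => ‖c k‖)
    {φ : κ → α → 𝕜} (hφ : ∀ k, AEStronglyMeasurable (φ k) μ) {C : ℝ}
    (hC : ∀ k x, ‖φ k x‖ ≤ C) :
    HasSum (fun k => c k * ∫ x, φ k x ∂μ) (∫ x, ∑' k, c k * φ k x ∂μ) := by
  have norm_term_le (k : κ) (x : α) : ‖c k * φ k x‖ ≤ ‖c k‖ * C :=
    (norm_mul_le _ _).trans (mul_le_mul_of_nonneg_left (hC k x) (norm_nonneg _))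
  simp only [← integral_const_mul]
  refine hasSum_integral_of_dominated_convergence (fun k _ => ‖c k‖ * C)
    (fun k => (hφ k).const_mul (c k)) (fun k => .of_forall (norm_term_le k))
    (.of_forall fun _ => hc.mul_right C) (integrable_const _) (.of_forall fun x => ?_)
  exact (Summable.of_norm_bounded (hc.mul_right C) fun k => norm_term_le k x).hasSum

lemma setIntegral_Icc_fintype_prod_eq_prod {ι 𝕜 : Type*} [Fintype ι] [RCLike 𝕜]
    (u v : ι → ℝ) (g : ι → ℝ → 𝕜) :
    ∫ x in Set.Icc u v, ∏ j, g j (x j) = ∏ j, ∫ t in Set.Icc (u j) (v j), g j t := by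
  rw [← Set.pi_univ_Icc, volume_pi, Measure.restrict_pi_pi, integral_fintype_prod_eq_prod]

lemma summable_ite_norm_iff_of_eq_const_mul {κ 𝕜 : Type*} [NormedDivisionRing 𝕜]
    {p : κ → Prop} [DecidablePred p] {b g : κ → 𝕜} {c : 𝕜} (hc : c ≠ 0)
    (hbg : ∀ m, p m → b m = c * g m) :
    (Summable fun m => if p m then ‖b m‖ else 0) ↔ Summable fun m => if p m then ‖g m‖ else 0 := by
  rw [← summable_mul_left_iff (f := fun m => if p m then ‖g m‖ else 0) (norm_ne_zero_iff.mpr hc)]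
  refine summable_congr fun m => ?_
  split_ifs with hm
  · rw [hbg m hm, norm_mul]
  · rw [mul_zero]

end GeneralFacts

section TrigIntegrals

lemma integral_sin_int_mul (n : ℤ) :
    ∫ x in (0 : ℝ)..Real.pi, Real.sin (n * x) = if Odd n then 2 / (n : ℝ) else 0 := by
  rcases eq_or_ne n 0 with rfl | hn
  · simp
  rw [intervalIntegral.integral_comp_mul_left Real.sin (Int.cast_ne_zero.mpr hn), integral_sin,
    Real.cos_int_mul_pi, mul_zero, Real.cos_zero, smul_eq_mul]
  split_ifs with h
  · rw [h.neg_one_zpow]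
    ring
  · rw [(Int.not_odd_iff_even.mp h).neg_one_zpow, sub_self, mul_zero]

lemma integral_cos_nat_mul_mul_sin_nat_mul (k m : ℕ) :
    ∫ x in (0 : ℝ)..Real.pi, Real.cos (k * x) * Real.sin (m * x) =
      if Odd (k + m) then 1 / ((m : ℝ) + k) + 1 / ((m : ℝ) - k) else 0 := by
  have product_to_sum (x : ℝ) : Real.cos (k * x) * Real.sin (m * x) =
      1 / 2 * (Real.sin ((m + k : ℤ) * x) + Real.sin ((m - k : ℤ) * x)) := by
    push_cast
    rw [add_mul, sub_mul]
    linarith [Real.two_mul_sin_mul_cos (m * x) (k * x)]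
  have intervalIntegrable_sin (n : ℤ) :
      IntervalIntegrable (fun x : ℝ => Real.sin (n * x)) volume 0 Real.pi :=
    Continuous.intervalIntegrable (by fun_prop) _ _
  have odd_add_iff : Odd ((m : ℤ) + k) ↔ Odd (k + m) := by
    rw [add_comm k m, ← Int.odd_coe_nat, Nat.cast_add]
  have odd_sub_iff : Odd ((m : ℤ) - k) ↔ Odd (k + m) := by
    rw [← odd_add_iff, Int.odd_sub, Int.odd_add]
  simp only [product_to_sum]
  rw [intervalIntegral.integral_const_mul,
    intervalIntegral.integral_add (intervalIntegrable_sin _) (intervalIntegrable_sin _),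
    integral_sin_int_mul, integral_sin_int_mul]
  simp only [odd_add_iff, odd_sub_iff]
  split_ifs
  · push_cast
    ring
  · simp

end TrigIntegrals

section OneVariable

/-- The one-variable trigonometric mode of frequency `n`: `cos (n x)` if `e` is true and
`sin (n x)` if `e` is false. The mode of the opposite type is `trigMode !e`. -/
noncomputable def trigMode (e : Bool) (n : ℕ) (x : ℝ) : ℂ :=
  if e then (Real.cos (n * x) : ℂ) else (Real.sin (n * x) : ℂ)

lemma trigMode_not (e : Bool) (n : ℕ) (x : ℝ) :
    trigMode (!e) n x = if e then (Real.sin (n * x) : ℂ) else (Real.cos (n * x) : ℂ) := by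
  cases e <;> rfl

lemma continuous_trigMode (e : Bool) (n : ℕ) : Continuous (trigMode e n) := by
  unfold trigMode
  split_ifs <;> fun_prop

lemma norm_trigMode_le_one (e : Bool) (n : ℕ) (x : ℝ) : ‖trigMode e n x‖ ≤ 1 := by
  unfold trigMode
  split_ifs <;> rw [Complex.norm_real]
  · exact Real.abs_cos_le_one _
  · exact Real.abs_sin_le_one _

/-- The one-variable kernel of the discrete Hilbert transform `ℏ_η⁻`, with output index `m` and
summation index `k`; `e` is the corresponding component of `η`. The restriction to odd `k - m` is
not part of the kernel. -/
noncomputable def hilbertKernel (e : Bool) (m k : ℕ) : ℂ :=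
  if e then 1 / ((m : ℂ) + (k : ℂ)) + 1 / ((m : ℂ) - (k : ℂ))
  else 1 / ((m : ℂ) + (k : ℂ)) + 1 / ((k : ℂ) - (m : ℂ))

lemma hilbertKernel_not (e : Bool) (m k : ℕ) : hilbertKernel (!e) m k = hilbertKernel e k m := by
  cases e <;> simp [hilbertKernel, add_comm]

lemma integral_trigMode_true_mul_trigMode_false (k m : ℕ) :
    ∫ x in Set.Icc (0 : ℝ) Real.pi, trigMode true k x * trigMode false m x =
      if Odd (k + m) then hilbertKernel true m k else 0 := by
  have integrand_eq (x : ℝ) : trigMode true k x * trigMode false m x =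
      ((Real.cos (k * x) * Real.sin (m * x) : ℝ) : ℂ) := by
    simp [trigMode]
  simp only [integrand_eq]
  rw [integral_Icc_eq_integral_Ioc, ← intervalIntegral.integral_of_le Real.pi_pos.le,
    intervalIntegral.integral_ofReal, integral_cos_nat_mul_mul_sin_nat_mul]
  split_ifs <;> simp [hilbertKernel]

lemma integral_trigMode_mul_trigMode_not (e : Bool) (k m : ℕ) :
    ∫ x in Set.Icc (0 : ℝ) Real.pi, trigMode e k x * trigMode (!e) m x =
      if Odd (k + m) then hilbertKernel e m k else 0 := by
  cases e
  · simp only [Bool.not_false, mul_comm (trigMode false k _)]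
    rw [integral_trigMode_true_mul_trigMode_false, add_comm m k, ← hilbertKernel_not, Bool.not_true]
  · exact integral_trigMode_true_mul_trigMode_false k m

end OneVariable

section SeveralVariables

variable {ι : Type*} [Fintype ι]

/-- The mixed trigonometric mode `∏_{η_j=1} cos (k_j x_j) · ∏_{η_j=0} sin (k_j x_j)` on `ℝ^ι`. The
modes of the re-expansion, with sines and cosines exchanged, are `mixedMode fun j => !η j`. -/
noncomputable def mixedMode (η : ι → Bool) (k : ι → ℕ) (x : ι → ℝ) : ℂ :=
  ∏ j, trigMode (η j) (k j) (x j)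

lemma continuous_mixedMode (η : ι → Bool) (k : ι → ℕ) : Continuous (mixedMode η k) :=
  continuous_finsetProd _ fun j _ => (continuous_trigMode (η j) (k j)).comp (continuous_apply j)

lemma norm_mixedMode_le_one (η : ι → Bool) (k : ι → ℕ) (x : ι → ℝ) : ‖mixedMode η k x‖ ≤ 1 := by
  rw [mixedMode, norm_prod]
  exact Finset.prod_le_one (fun _ _ => norm_nonneg _) fun j _ => norm_trigMode_le_one _ _ _

lemma integral_mixedMode_mul_mixedMode_not (η : ι → Bool) (k m : ι → ℕ) :
    ∫ x in Set.Icc (0 : ι → ℝ) (fun _ => Real.pi),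
        mixedMode η k x * mixedMode (fun j => !η j) m x =
      ∏ j, if Odd (k j + m j) then hilbertKernel (η j) (m j) (k j) else 0 := by
  simp only [mixedMode, ← Finset.prod_mul_distrib]
  rw [setIntegral_Icc_fintype_prod_eq_prod 0 (fun _ => Real.pi)
    fun j t => trigMode (η j) (k j) t * trigMode (!η j) (m j) t]
  exact Finset.prod_congr rfl fun j _ => integral_trigMode_mul_trigMode_not _ _ _

theorem hasSum_integral_tsum_mixedMode_mul_mixedMode_not (η : ι → Bool) {c : (ι → ℕ) → ℂ}
    (hc : Summable fun k => ‖c k‖) (m : ι → ℕ) :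
    HasSum (fun k => c k * ∏ j, if Odd (k j + m j) then hilbertKernel (η j) (m j) (k j) else 0)
      (∫ x in Set.Icc (0 : ι → ℝ) (fun _ => Real.pi),
        (∑' k, c k * mixedMode η k x) * mixedMode (fun j => !η j) m x) := by
  simp only [← integral_mixedMode_mul_mixedMode_not, ← tsum_mul_right, mul_assoc]
  have : IsFiniteMeasure (volume.restrict (Set.Icc (0 : ι → ℝ) fun _ => Real.pi)) :=
    isFiniteMeasure_restrict.mpr isCompact_Icc.measure_ne_top
  refine hasSum_integral_tsum_mul_of_norm_le hc (fun k => ?_) (C := 1) fun k x => ?_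
  · exact ((continuous_mixedMode η k).mul (continuous_mixedMode _ m)).aestronglyMeasurable
  · rw [norm_mul]
    exact mul_le_one₀ (norm_mixedMode_le_one _ _ _) (norm_nonneg _) (norm_mixedMode_le_one _ _ _)

end SeveralVariables

section HalvedTransform

variable {d : ℕ} (η : Fin d → Bool) (a : (Fin d → ℕ) → ℂ)

/-- The `k`-th term of the series defining `hbarMinusMulti η a m`. -/
noncomputable def hbarMinusTerm (m k : Fin d → ℕ) : ℂ :=
  if ∀ j, 1 ≤ k j ∧ Odd (k j + m j) then a k * ∏ j, hilbertKernel (η j) (m j) (k j) else 0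

lemma hbarMinusTerm_eq_mul_prod (m k : Fin d → ℕ) :
    hbarMinusTerm η a m k = (if ∀ j, 1 ≤ k j then a k else 0) *
      ∏ j, if Odd (k j + m j) then hilbertKernel (η j) (m j) (k j) else 0 := by
  rw [hbarMinusTerm, Fintype.prod_ite_zero, ite_zero_mul_ite_zero]
  congr 1
  exact propext forall_and

theorem hasSum_hbarMinusTerm
    (ha : Summable fun k : Fin d → ℕ => if ∀ j, 1 ≤ k j then ‖a k‖ else 0) (m : Fin d → ℕ) :
    HasSum (hbarMinusTerm η a m)
      (∫ x in Set.Icc (0 : Fin d → ℝ) (fun _ => Real.pi),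
        (∑' k : Fin d → ℕ, if ∀ j, 1 ≤ k j then a k * mixedMode η k x else 0) *
          mixedMode (fun j => !η j) m x) := by
  have hc : Summable fun k : Fin d → ℕ => ‖if ∀ j, 1 ≤ k j then a k else 0‖ := by
    simpa only [apply_ite norm, norm_zero] using ha
  simp only [← ite_zero_mul]
  exact (hasSum_integral_tsum_mixedMode_mul_mixedMode_not η hc m).congr_fun
    (hbarMinusTerm_eq_mul_prod η a m)

end HalvedTransform

/-- multidimensional re-expansion coefficients coincide with
`(2/π)^d ℏ_η⁻a(m)`, and their summability is equivalent to that of `ℏ_η⁻a`. -/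
theorem stmt_12 (d : ℕ) (hd : 1 ≤ d) (η : Fin d → Bool) (a : (Fin d → ℕ) → ℂ)
    (ha : Summable fun k : Fin d → ℕ => if ∀ j, 1 ≤ k j then ‖a k‖ else 0)
    (f : (Fin d → ℝ) → ℂ)
    (hf : ∀ x : Fin d → ℝ, f x = ∑' k : Fin d → ℕ, if ∀ j, 1 ≤ k j then
      a k * ∏ j, (if η j then (Real.cos ((k j : ℝ) * x j) : ℂ)
                  else (Real.sin ((k j : ℝ) * x j) : ℂ)) else 0)
    (b : (Fin d → ℕ) → ℂ)
    (hb : ∀ m : Fin d → ℕ, (∀ j, 1 ≤ m j) →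
      b m = ((2 / Real.pi : ℝ) : ℂ) ^ d *
        ∫ x in Set.Icc (0 : Fin d → ℝ) (fun _ => Real.pi),
          f x * ∏ j, (if η j then (Real.sin ((m j : ℝ) * x j) : ℂ)
                      else (Real.cos ((m j : ℝ) * x j) : ℂ))) :
    (∀ m : Fin d → ℕ, (∀ j, 1 ≤ m j) →
      (Summable fun k : Fin d → ℕ => ‖if ∀ j, 1 ≤ k j ∧ Odd (k j + m j) then
        a k * ∏ j, (if η j then 1 / ((m j : ℂ) + (k j : ℂ)) + 1 / ((m j : ℂ) - (k j : ℂ))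
                    else 1 / ((m j : ℂ) + (k j : ℂ)) + 1 / ((k j : ℂ) - (m j : ℂ)))
        else 0‖) ∧
      b m = ((2 / Real.pi : ℝ) : ℂ) ^ d * hbarMinusMulti η a m) ∧
    ((Summable fun m : Fin d → ℕ => if ∀ j, 1 ≤ m j then ‖b m‖ else 0) ↔
      (Summable fun m : Fin d → ℕ =>
        if ∀ j, 1 ≤ m j then ‖hbarMinusMulti η a m‖ else 0)) := by
  have hasSum_term := hasSum_hbarMinusTerm η a ha
  have b_eq (m : Fin d → ℕ) (hm : ∀ j, 1 ≤ m j) :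
      b m = ((2 / Real.pi : ℝ) : ℂ) ^ d * hbarMinusMulti η a m := by
    simp only [hb m hm, hf, ← trigMode_not]
    exact congrArg _ (hasSum_term m).tsum_eq.symm
  have const_ne_zero : ((2 / Real.pi : ℝ) : ℂ) ^ d ≠ 0 :=
    pow_ne_zero d (Complex.ofReal_ne_zero.mpr (div_ne_zero two_ne_zero Real.pi_ne_zero))
  -- In `ℂ` unconditional convergence is absolute, so `HasSum` already gives norm summability.
  exact ⟨fun m hm => ⟨(hasSum_term m).summable.norm, b_eq m hm⟩,
    summable_ite_norm_iff_of_eq_const_mul const_ne_zero b_eq⟩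
end

section
/- Let d ≥ 1, η ∈ {0,1}^d, and let a = (a_k)_{k∈ℕ₊^d} be complex numbers with Σ_k |a_k| · ∏_{j=1}^d log(k_j + 1) < ∞. Let f(x) = Σ_k a_k · (∏_{j:η_j=1} cos(k_j x_j)) · (∏_{j:η_j=0} sin(k_j x_j)) on [0,π]^d, and assume f vanishes on every face of the cube, i.e. f(x) = 0 whenever x_j ∈ {0, π} for some j. Then the re-expansion coefficients b_m = (2/π)^d ∫_{[0,π]^d} f(x) · (∏_{j:η_j=0} cos(m_j x_j)) · (∏_{j:η_j=1} sin(m_j x_j)) dx satisfy Σ_{m∈ℕ₊^d} |b_m| < ∞. -/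
open MeasureTheory

/-!
Expanding `f` termwise, the coefficient `b_m` is a sum over `k` of `a_k` times a product of
one-dimensional integrals. For a sine coordinate, `∫ sin (kx) cos (mx)` is of size
`k / (m |k - m|)`, and its sum over `m` is `O(log (k + 1))`. For a cosine coordinate,
`∫ cos (kx) sin (mx)` decays only like `1 / m`, because `cos (kx)` does not vanish at the endpoints.
Since `f` does vanish there, `b_m` is unchanged if the point evaluations `-g(0) / m` and
`(-1)^m g(π) / m` are added to `∫ g(x) sin (mx)` in every cosine coordinate; they cancel the `1 / m`
tail of each term and restore the bound. Putting point masses at `0` and `π` makes the corrected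
functional an integral, so that Fubini factors its values on products of one-variable functions.
-/

section PositiveIndices

variable {ι M : Type*}

lemma injective_pi_pnat_coe : Function.Injective fun (k : ι → ℕ+) j => (k j : ℕ) :=
  PNat.coe_injective.comp_left

variable [DecidablePred fun k : ι → ℕ => ∀ j, 1 ≤ k j]

lemma ite_one_le_eq_zero_of_notMem_range_pnat_coe [Zero M] {g : (ι → ℕ) → M} {k : ι → ℕ}
    (hk : k ∉ Set.range fun (n : ι → ℕ+) j => (n j : ℕ)) :
    (if ∀ j, 1 ≤ k j then g k else 0) = 0 :=
  if_neg fun hpos => hk ⟨fun j => ⟨k j, hpos j⟩, rfl⟩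

variable [AddCommMonoid M] [TopologicalSpace M]

lemma summable_ite_one_le_iff {g : (ι → ℕ) → M} :
    (Summable fun k => if ∀ j, 1 ≤ k j then g k else 0) ↔
      Summable fun k : ι → ℕ+ => g fun j => k j := by
  rw [← injective_pi_pnat_coe.summable_iff fun _ => ite_one_le_eq_zero_of_notMem_range_pnat_coe]
  simp only [Function.comp_def, Nat.one_le_iff_ne_zero, ne_eq, PNat.ne_zero, not_false_eq_true,
    implies_true, if_true]

lemma tsum_ite_one_le {g : (ι → ℕ) → M} :
    (∑' k, if ∀ j, 1 ≤ k j then g k else 0) = ∑' k : ι → ℕ+, g fun j => k j := by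
  rw [← injective_pi_pnat_coe.tsum_eq (Function.support_subset_iff'.2 fun _ =>
    ite_one_le_eq_zero_of_notMem_range_pnat_coe)]
  simp only [Nat.one_le_iff_ne_zero, ne_eq, PNat.ne_zero, not_false_eq_true, implies_true, if_true]

end PositiveIndices

section TensorKernels

variable {ι : Type*} [Fintype ι]

lemma sum_prod_apply_le_prod_tsum {α : ι → Type*} {g : ∀ j, α j → ℝ} (hg : ∀ j x, 0 ≤ g j x)
    (hs : ∀ j, Summable (g j)) (s : Finset (∀ j, α j)) :
    ∑ x ∈ s, ∏ j, g j (x j) ≤ ∏ j, ∑' t, g j t := by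
  classical
  calc ∑ x ∈ s, ∏ j, g j (x j)
      ≤ ∑ x ∈ Fintype.piFinset fun j => s.image (· j), ∏ j, g j (x j) :=
        Finset.sum_le_sum_of_subset_of_nonneg
          (fun x hx => Fintype.mem_piFinset.2 fun _ => Finset.mem_image_of_mem _ hx)
          fun _ _ _ => Finset.prod_nonneg fun j _ => hg j _
    _ = ∏ j, ∑ t ∈ s.image (· j), g j t := (Finset.prod_univ_sum _ _).symm
    _ ≤ ∏ j, ∑' t, g j t := Finset.prod_le_prod
        (fun j _ => Finset.sum_nonneg fun _ _ => hg j _)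
        fun j _ => (hs j).sum_le_tsum _ fun _ _ => hg j _

lemma summable_prod_apply {α : ι → Type*} {g : ∀ j, α j → ℝ} (hg : ∀ j x, 0 ≤ g j x)
    (hs : ∀ j, Summable (g j)) : Summable fun x : ∀ j, α j => ∏ j, g j (x j) :=
  summable_of_sum_le (fun _ => Finset.prod_nonneg fun j _ => hg j _)
    (sum_prod_apply_le_prod_tsum hg hs)

lemma summable_mul_prod_kernel {κ ν : ι → Type*} {c : (∀ j, κ j) → ℝ}
    {K : ∀ j, κ j → ν j → ℝ} {L : ∀ j, κ j → ℝ} (hc : ∀ k, 0 ≤ c k) (hK : ∀ j k m, 0 ≤ K j k m)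
    (hKs : ∀ j k, Summable (K j k)) (hKL : ∀ j k, ∑' m, K j k m ≤ L j k)
    (hcL : Summable fun k : ∀ j, κ j => c k * ∏ j, L j (k j)) :
    Summable fun p : (∀ j, κ j) × (∀ j, ν j) => c p.1 * ∏ j, K j (p.1 j) (p.2 j) := by
  have hprod (k : ∀ j, κ j) (m : ∀ j, ν j) : 0 ≤ ∏ j, K j (k j) (m j) :=
    Finset.prod_nonneg fun _ _ => hK _ _ _
  have hrow (k : ∀ j, κ j) : Summable fun m : ∀ j, ν j => ∏ j, K j (k j) (m j) :=
    summable_prod_apply (fun j => hK j (k j)) fun j => hKs j (k j)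
  have hrow_le (k : ∀ j, κ j) : ∑' m : ∀ j, ν j, ∏ j, K j (k j) (m j) ≤ ∏ j, L j (k j) :=
    calc ∑' m : ∀ j, ν j, ∏ j, K j (k j) (m j)
        ≤ ∏ j, ∑' n, K j (k j) n := Real.tsum_le_of_sum_le (hprod k)
          (sum_prod_apply_le_prod_tsum (fun j => hK j (k j)) fun j => hKs j (k j))
      _ ≤ ∏ j, L j (k j) :=
          Finset.prod_le_prod (fun _ _ => tsum_nonneg (hK _ _)) fun _ _ => hKL _ _
  have hnonneg (p : (∀ j, κ j) × (∀ j, ν j)) : 0 ≤ c p.1 * ∏ j, K j (p.1 j) (p.2 j) :=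
    mul_nonneg (hc _) (hprod _ _)
  refine (summable_prod_of_nonneg hnonneg).2 ⟨fun k => (hrow k).mul_left (c k), ?_⟩
  simp only [tsum_mul_left]
  exact hcL.of_nonneg_of_le (fun k => mul_nonneg (hc k) (tsum_nonneg (hprod k)))
    fun k => mul_le_mul_of_nonneg_left (hrow_le k) (hc k)

lemma hasSum_integral_pi_prod_smul {κ E : Type*} [Countable κ] [NormedAddCommGroup E]
    [NormedSpace ℝ E] [CompleteSpace E] {X : ι → Type*} [∀ j, MeasurableSpace (X j)]
    {μ : ∀ j, Measure (X j)} [∀ j, SigmaFinite (μ j)] {g : κ → ∀ j, X j → ℝ} {a : κ → E}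
    (hg : ∀ k j, Integrable (g k j) (μ j))
    (hs : Summable fun k => (∏ j, ∫ t, ‖g k j t‖ ∂μ j) * ‖a k‖) :
    HasSum (fun k => (∏ j, ∫ t, g k j t ∂μ j) • a k)
      (∫ x, ∑' k, (∏ j, g k j (x j)) • a k ∂Measure.pi μ) := by
  have hint (k : κ) : Integrable (fun x : ∀ j, X j => (∏ j, g k j (x j)) • a k) (Measure.pi μ) :=
    (Integrable.fintype_prod_dep (hg k)).smul_const _
  have hnorm (k : κ) : ∫ x : ∀ j, X j, ‖(∏ j, g k j (x j)) • a k‖ ∂Measure.pi μ =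
      (∏ j, ∫ t, ‖g k j t‖ ∂μ j) * ‖a k‖ := by
    simp only [norm_smul, norm_prod, integral_mul_const]
    rw [integral_fintype_prod_eq_prod fun j t => ‖g k j t‖]
  have hsum := hasSum_integral_of_summable_integral_norm hint (by simpa only [hnorm] using hs)
  simpa only [integral_smul_const, integral_fintype_prod_eq_prod] using hsum

end TensorKernels

section EndpointMeasure

/-- Lebesgue measure on `(a, b)` together with unit point masses at both endpoints. Integrating a
function that vanishes at the endpoints against it is the same as integrating over `[a, b]`, but
the integrals of general functions may be modified by choosing weights at the endpoints. -/
noncomputable def endpointMeasure (a b : ℝ) : Measure ℝ :=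
  volume.restrict (Set.Ioo a b) + Measure.dirac a + Measure.dirac b

instance (a b : ℝ) : IsFiniteMeasure (endpointMeasure a b) := by
  unfold endpointMeasure; infer_instance

variable {a b : ℝ} {E : Type*} [NormedAddCommGroup E]

lemma endpointMeasure_restrict_Ioo (a b : ℝ) :
    (endpointMeasure a b).restrict (Set.Ioo a b) = volume.restrict (Set.Ioo a b) := by
  simp [endpointMeasure, Measure.restrict_add, restrict_dirac' measurableSet_Ioo]

lemma ae_endpointMeasure_mem_Ioo_or_eq (a b : ℝ) :
    ∀ᵐ t ∂endpointMeasure a b, t ∈ Set.Ioo a b ∨ t = a ∨ t = b := by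
  simp only [endpointMeasure, ae_add_measure_iff, ae_dirac_eq, Filter.eventually_pure,
    true_or, or_true, and_true]
  exact (ae_restrict_mem measurableSet_Ioo).mono fun _ => Or.inl

lemma integrable_endpointMeasure {g : ℝ → E} (hg : IntegrableOn g (Set.Ioo a b)) :
    Integrable g (endpointMeasure a b) :=
  (hg.integrable.add_measure (integrable_dirac (by simp))).add_measure (integrable_dirac (by simp))

variable [NormedSpace ℝ E]

lemma integral_endpointMeasure [CompleteSpace E] (hab : a ≤ b) {g : ℝ → E}
    (hg : IntegrableOn g (Set.Ioo a b)) :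
    ∫ t, g t ∂endpointMeasure a b = (∫ t in a..b, g t) + g a + g b := by
  have hdirac (c : ℝ) : Integrable g (Measure.dirac c) := integrable_dirac (by simp)
  rw [endpointMeasure, integral_add_measure (hg.integrable.add_measure (hdirac a)) (hdirac b),
    integral_add_measure hg.integrable (hdirac a), integral_dirac, integral_dirac,
    intervalIntegral.integral_of_le hab, integral_Ioc_eq_integral_Ioo]

lemma setIntegral_Icc_eq_integral_pi_endpointMeasure {ι : Type*} [Fintype ι] {a b : ι → ℝ}
    {F : (ι → ℝ) → E} (hF : ∀ x, (∃ j, x j = a j ∨ x j = b j) → F x = 0) :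
    ∫ x in Set.Icc a b, F x = ∫ x, F x ∂Measure.pi fun j => endpointMeasure (a j) (b j) := by
  have hae : ∀ᵐ x ∂Measure.pi fun j => endpointMeasure (a j) (b j),
      x ∉ Set.univ.pi (fun j => Set.Ioo (a j) (b j)) → F x = 0 := by
    have hcoord : ∀ᵐ x ∂Measure.pi fun j => endpointMeasure (a j) (b j),
        ∀ j, x j ∈ Set.Ioo (a j) (b j) ∨ x j = a j ∨ x j = b j :=
      ae_all_iff.2 fun j => (Measure.tendsto_eval_ae_ae
        (μ := fun j => endpointMeasure (a j) (b j))).eventually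
        (ae_endpointMeasure_mem_Ioo_or_eq (a j) (b j))
    filter_upwards [hcoord] with x hx hmem
    obtain ⟨j, hj⟩ : ∃ j, x j ∉ Set.Ioo (a j) (b j) := by
      simpa only [Set.mem_univ_pi, not_forall] using hmem
    exact hF x ⟨j, (hx j).resolve_left hj⟩
  rw [← setIntegral_eq_integral_of_ae_compl_eq_zero hae, Measure.restrict_pi_pi]
  simp only [endpointMeasure_restrict_Ioo]
  rw [← Measure.restrict_pi_pi, volume_pi, setIntegral_congr_set Measure.univ_pi_Ioo_ae_eq_Icc]

end EndpointMeasure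

section HalfRange

open Real

/-- The half-range trigonometric system on `[0, π]`: `cos (k x)` for `e = true` and `sin (k x)` for
`e = false`. -/
noncomputable def halfRange (e : Bool) (k : ℕ) (x : ℝ) : ℝ :=
  if e then cos (k * x) else sin (k * x)

lemma halfRange_not (e : Bool) (k : ℕ) (x : ℝ) :
    halfRange (!e) k x = if e then sin (k * x) else cos (k * x) := by
  cases e <;> simp [halfRange]

/-- The conjugate half-range function `halfRange (!e) m` with its values at `0` and `π` replaced so
that, against `endpointMeasure 0 π`, it tests functions vanishing at the endpoints as before. The
point weights are the ones for which the function also annihilates affine functions when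
`e = true`. -/
noncomputable def endpointWeight (e : Bool) (m : ℕ) : ℝ → ℝ :=
  Function.update (Function.update (halfRange (!e) m) 0 (-(m : ℝ)⁻¹)) π ((-1) ^ m * (m : ℝ)⁻¹)

lemma continuous_halfRange (e : Bool) (k : ℕ) : Continuous (halfRange e k) := by
  unfold halfRange
  split_ifs <;> fun_prop

lemma abs_halfRange_le_one (e : Bool) (k : ℕ) (x : ℝ) : |halfRange e k x| ≤ 1 := by
  cases e <;> simp [halfRange, abs_cos_le_one, abs_sin_le_one]

lemma endpointWeight_zero (e : Bool) (m : ℕ) : endpointWeight e m 0 = -(m : ℝ)⁻¹ := by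
  simp [endpointWeight, pi_ne_zero.symm]

lemma endpointWeight_pi (e : Bool) (m : ℕ) : endpointWeight e m π = (-1) ^ m * (m : ℝ)⁻¹ := by
  simp [endpointWeight]

lemma endpointWeight_of_ne {x : ℝ} (h0 : x ≠ 0) (hπ : x ≠ π) (e : Bool) (m : ℕ) :
    endpointWeight e m x = halfRange (!e) m x := by
  simp [endpointWeight, h0, hπ]

lemma abs_endpointWeight_le_one (e : Bool) (m : ℕ) (x : ℝ) : |endpointWeight e m x| ≤ 1 := by
  rcases eq_or_ne x 0 with rfl | h0
  · simpa [endpointWeight_zero] using m.cast_inv_le_one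
  rcases eq_or_ne x π with rfl | hπ
  · simpa [endpointWeight_pi, abs_mul] using m.cast_inv_le_one
  rw [endpointWeight_of_ne h0 hπ]
  exact abs_halfRange_le_one _ _ _

lemma eqOn_halfRange_mul_endpointWeight (e : Bool) (k m : ℕ) :
    Set.EqOn (fun x => halfRange e k x * endpointWeight e m x)
      (fun x => halfRange e k x * halfRange (!e) m x) (Set.Ioo 0 π) := fun x hx => by
  simp only [endpointWeight_of_ne hx.1.ne' hx.2.ne]

lemma integrableOn_halfRange_mul_endpointWeight (e : Bool) (k m : ℕ) :
    IntegrableOn (fun x => halfRange e k x * endpointWeight e m x) (Set.Ioo 0 π) :=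
  (integrableOn_congr_fun (eqOn_halfRange_mul_endpointWeight e k m) measurableSet_Ioo).2 <|
    ((continuous_halfRange e k).mul (continuous_halfRange (!e) m)).integrableOn_Icc.mono_set
      Set.Ioo_subset_Icc_self

lemma integral_norm_halfRange_mul_endpointWeight_le (e : Bool) (k m : ℕ) :
    ∫ x, ‖halfRange e k x * endpointWeight e m x‖ ∂endpointMeasure 0 π ≤
      (endpointMeasure 0 π).real Set.univ := by
  calc ∫ x, ‖halfRange e k x * endpointWeight e m x‖ ∂endpointMeasure 0 π
      ≤ ∫ _, 1 ∂endpointMeasure 0 π := by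
        refine integral_mono (integrable_endpointMeasure
          (integrableOn_halfRange_mul_endpointWeight e k m)).norm (integrable_const _) fun x => ?_
        simpa only [norm_mul, norm_eq_abs] using mul_le_one₀ (abs_halfRange_le_one e k x)
          (abs_nonneg _) (abs_endpointWeight_le_one e m x)
    _ = (endpointMeasure 0 π).real Set.univ := by simp

lemma integral_halfRange_mul_endpointWeight (e : Bool) (k m : ℕ) :
    ∫ x, halfRange e k x * endpointWeight e m x ∂endpointMeasure 0 π =
      (∫ x in (0 : ℝ)..π, halfRange e k x * halfRange (!e) m x)
        - halfRange e k 0 * (m : ℝ)⁻¹ + halfRange e k π * ((-1) ^ m * (m : ℝ)⁻¹) := by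
  rw [integral_endpointMeasure pi_pos.le (integrableOn_halfRange_mul_endpointWeight e k m),
    intervalIntegral.integral_congr_Ioo_of_le pi_pos.le (eqOn_halfRange_mul_endpointWeight e k m),
    endpointWeight_zero, endpointWeight_pi, mul_neg, ← sub_eq_add_neg]

-- At `c = 0` both sides are `0`, the right-hand side by `x / 0 = 0`.
lemma integral_sin_const_mul (a b c : ℝ) :
    ∫ x in a..b, sin (c * x) = (cos (c * a) - cos (c * b)) / c := by
  rcases eq_or_ne c 0 with rfl | hc
  · simp
  · rw [eq_div_iff hc, mul_comm, intervalIntegral.mul_integral_comp_mul_left, integral_sin]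

lemma integral_sin_nat_mul_mul_cos_nat_mul (k m : ℕ) :
    ∫ x in (0 : ℝ)..π, sin (k * x) * cos (m * x) =
      (1 - (-1) ^ (k + m)) / 2 * ((k + m : ℝ)⁻¹ + (k - m : ℝ)⁻¹) := by
  have hprod (x : ℝ) : sin (k * x) * cos (m * x) =
      (sin ((k - m : ℝ) * x) + sin ((k + m : ℝ) * x)) / 2 := by
    rw [sub_mul, add_mul, ← two_mul_sin_mul_cos]; ring
  have hint (c : ℝ) : IntervalIntegrable (fun x => sin (c * x)) volume 0 π :=
    Continuous.intervalIntegrable (by fun_prop) _ _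
  simp only [hprod]
  rw [intervalIntegral.integral_div, intervalIntegral.integral_add (hint _) (hint _),
    integral_sin_const_mul, integral_sin_const_mul]
  simp only [sub_mul, add_mul, cos_add, cos_sub, sin_nat_mul_pi, cos_nat_mul_pi, mul_zero,
    cos_zero, pow_add]
  ring

lemma integral_sin_mul_endpointWeight (k m : ℕ) :
    ∫ x, halfRange false k x * endpointWeight false m x ∂endpointMeasure 0 π =
      (1 - (-1) ^ (k + m)) / 2 * ((k + m : ℝ)⁻¹ + (k - m : ℝ)⁻¹) := by
  rw [integral_halfRange_mul_endpointWeight]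
  simp [halfRange, integral_sin_nat_mul_mul_cos_nat_mul, sin_nat_mul_pi]

lemma integral_cos_mul_endpointWeight (k m : ℕ) :
    ∫ x, halfRange true k x * endpointWeight true m x ∂endpointMeasure 0 π =
      (1 - (-1) ^ (k + m)) / 2 * ((m + k : ℝ)⁻¹ + (m - k : ℝ)⁻¹ - 2 * (m : ℝ)⁻¹) := by
  have hswap : ∫ x in (0 : ℝ)..π, cos (k * x) * sin (m * x) =
      (1 - (-1) ^ (k + m)) / 2 * ((m + k : ℝ)⁻¹ + (m - k : ℝ)⁻¹) := by
    simpa only [mul_comm, add_comm k m] using integral_sin_nat_mul_mul_cos_nat_mul m k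
  rw [integral_halfRange_mul_endpointWeight]
  simp only [halfRange, if_true, Bool.not_true, Bool.false_eq_true, if_false, hswap, mul_zero,
    cos_zero, cos_nat_mul_pi]
  ring

/-- The majorant `2k / (m |k - m|)` of the re-expansion coefficients of the half-range systems. By
`x / 0 = 0` it vanishes on the diagonal, where the coefficients are zero as well. -/
noncomputable def reexpansionMajorant (k m : ℕ) : ℝ := 2 * k / (m * |(k : ℝ) - m|)

lemma reexpansionMajorant_nonneg (k m : ℕ) : 0 ≤ reexpansionMajorant k m := by
  unfold reexpansionMajorant; positivity

lemma abs_inv_add_add_inv_sub_le {k m : ℕ} (hm : m ≠ 0) (hkm : k ≠ m) :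
    |(k + m : ℝ)⁻¹ + (k - m : ℝ)⁻¹| ≤ reexpansionMajorant k m := by
  have hdiff : (k : ℝ) - m ≠ 0 := sub_ne_zero.2 (Nat.cast_injective.ne hkm)
  calc |(k + m : ℝ)⁻¹ + (k - m : ℝ)⁻¹| = |2 * k / ((k + m) * (k - m : ℝ))| := by
        congr 1; field_simp; ring
    _ = 2 * k / ((k + m) * |(k : ℝ) - m|) := by
        rw [abs_div, abs_mul (k + m : ℝ), abs_of_nonneg (by positivity : (0 : ℝ) ≤ 2 * k),
          abs_of_pos (by positivity : (0 : ℝ) < k + m)]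
    _ ≤ reexpansionMajorant k m := by
        unfold reexpansionMajorant; gcongr; simp

lemma abs_inv_add_add_inv_sub_sub_two_mul_inv_le {k m : ℕ} (hm : m ≠ 0) (hkm : k ≠ m) :
    |(m + k : ℝ)⁻¹ + (m - k : ℝ)⁻¹ - 2 * (m : ℝ)⁻¹| ≤ reexpansionMajorant k m := by
  have hm_pos : (0 : ℝ) < m := by positivity
  have hdiff : (m : ℝ) - k ≠ 0 := sub_ne_zero.2 (Nat.cast_injective.ne hkm.symm)
  calc |(m + k : ℝ)⁻¹ + (m - k : ℝ)⁻¹ - 2 * (m : ℝ)⁻¹|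
      = |2 * k / (m * (m - k : ℝ)) * (k / (m + k))| := by congr 1; field_simp; ring
    _ = reexpansionMajorant k m * (k / (m + k)) := by
        rw [abs_mul, abs_div, abs_mul (m : ℝ), abs_of_nonneg (by positivity : (0 : ℝ) ≤ 2 * k),
          abs_of_pos hm_pos, abs_sub_comm, abs_of_nonneg (by positivity : (0 : ℝ) ≤ k / (m + k)),
          reexpansionMajorant]
    _ ≤ reexpansionMajorant k m := by
        refine mul_le_of_le_one_right (reexpansionMajorant_nonneg k m) ?_
        rw [div_le_one (by positivity)]
        simp

lemma abs_integral_halfRange_mul_endpointWeight_le (e : Bool) (k : ℕ) {m : ℕ} (hm : m ≠ 0) :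
    |∫ x, halfRange e k x * endpointWeight e m x ∂endpointMeasure 0 π| ≤
      reexpansionMajorant k m := by
  have parity_mul_le {R : ℝ} (hR : k ≠ m → |R| ≤ reexpansionMajorant k m) :
      |(1 - (-1) ^ (k + m)) / 2 * R| ≤ reexpansionMajorant k m := by
    rcases eq_or_ne k m with rfl | hkm
    · simpa [← two_mul] using reexpansionMajorant_nonneg k k
    · rcases neg_one_pow_eq_or ℝ (k + m) with h | h <;> rw [h]
      · simpa using reexpansionMajorant_nonneg k m
      · norm_num [hR hkm]
  cases e
  · rw [integral_sin_mul_endpointWeight]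
    exact parity_mul_le (abs_inv_add_add_inv_sub_le hm)
  · rw [integral_cos_mul_endpointWeight]
    exact parity_mul_le (abs_inv_add_add_inv_sub_sub_two_mul_inv_le hm)

lemma cast_harmonic_eq_sum_range_add_one (n : ℕ) :
    (harmonic n : ℝ) = ∑ i ∈ Finset.range n, ((i : ℝ) + 1)⁻¹ := by
  simp [harmonic]

lemma reexpansionMajorant_le_of_le {k m : ℕ} (hmk : m ≤ k) :
    reexpansionMajorant k m ≤ 2 * (m : ℝ)⁻¹ + 2 * ((k - m : ℕ) : ℝ)⁻¹ := by
  rcases hmk.eq_or_lt with rfl | hlt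
  · simp [reexpansionMajorant]
  rcases eq_or_ne m 0 with rfl | hm
  · simp [reexpansionMajorant]
  have hdiff : (0 : ℝ) < k - m := sub_pos.2 (by exact_mod_cast hlt)
  rw [reexpansionMajorant, abs_of_pos hdiff, Nat.cast_sub hmk]
  apply le_of_eq
  field_simp
  ring

lemma reexpansionMajorant_add_one_add (k i : ℕ) :
    reexpansionMajorant k (k + 1 + i) = 2 * ((i : ℝ) + 1)⁻¹ - 2 * (((k + i : ℕ) : ℝ) + 1)⁻¹ := by
  have hdist : |(k : ℝ) - (k + 1 + i)| = i + 1 := by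
    rw [abs_sub_comm, abs_of_nonneg] <;> linarith [(i.cast_nonneg : (0 : ℝ) ≤ i)]
  rw [reexpansionMajorant]
  push_cast
  rw [hdist]
  field_simp
  ring

lemma sum_range_succ_reexpansionMajorant_le (k : ℕ) :
    ∑ m ∈ Finset.range (k + 1), reexpansionMajorant k m ≤ 4 * (harmonic k : ℝ) := by
  have hinv : ∑ m ∈ Finset.range (k + 1), (m : ℝ)⁻¹ = harmonic k := by
    simp [Finset.sum_range_succ', cast_harmonic_eq_sum_range_add_one]
  calc ∑ m ∈ Finset.range (k + 1), reexpansionMajorant k m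
      ≤ ∑ m ∈ Finset.range (k + 1), (2 * (m : ℝ)⁻¹ + 2 * ((k - m : ℕ) : ℝ)⁻¹) :=
        Finset.sum_le_sum fun m hm =>
          reexpansionMajorant_le_of_le (Nat.lt_succ_iff.1 (Finset.mem_range.1 hm))
    _ = 4 * (harmonic k : ℝ) := by
        rw [Finset.sum_add_distrib, ← Finset.mul_sum, ← Finset.mul_sum,
          Finset.sum_flip fun m => (m : ℝ)⁻¹, hinv]
        ring

-- The partial fractions beyond the diagonal nearly telescope, leaving only a block of length `k`.
lemma sum_range_reexpansionMajorant_add_one_add_le (k N : ℕ) :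
    ∑ i ∈ Finset.range N, reexpansionMajorant k (k + 1 + i) ≤ 2 * (harmonic k : ℝ) := by
  have hmono : ∑ i ∈ Finset.range N, ((i : ℝ) + 1)⁻¹ ≤
      ∑ i ∈ Finset.range (k + N), ((i : ℝ) + 1)⁻¹ :=
    Finset.sum_le_sum_of_subset_of_nonneg (Finset.range_mono (Nat.le_add_left N k))
      fun _ _ _ => by positivity
  rw [Finset.sum_range_add] at hmono
  simp only [reexpansionMajorant_add_one_add, Finset.sum_sub_distrib, ← Finset.mul_sum,
    cast_harmonic_eq_sum_range_add_one]
  linarith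

lemma half_le_log_natCast_add_one {k : ℕ} (hk : k ≠ 0) : 1 / 2 ≤ log ((k : ℝ) + 1) := by
  have hk_one : (1 : ℝ) ≤ k := Nat.one_le_cast.2 (Nat.one_le_iff_ne_zero.2 hk)
  have hlog : log 2 ≤ log ((k : ℝ) + 1) := log_le_log two_pos (by linarith)
  linarith [log_two_gt_d9]

lemma harmonic_le_three_mul_log_add_one_s15 {k : ℕ} (hk : k ≠ 0) :
    (harmonic k : ℝ) ≤ 3 * log ((k : ℝ) + 1) := by
  have hlog : log k ≤ log ((k : ℝ) + 1) := log_le_log (by positivity) (by linarith)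
  linarith [harmonic_le_one_add_log k, half_le_log_natCast_add_one hk]

lemma sum_range_reexpansionMajorant_le {k : ℕ} (hk : k ≠ 0) (N : ℕ) :
    ∑ m ∈ Finset.range N, reexpansionMajorant k m ≤ 18 * log ((k : ℝ) + 1) :=
  calc ∑ m ∈ Finset.range N, reexpansionMajorant k m
      ≤ ∑ m ∈ Finset.range (k + 1 + N), reexpansionMajorant k m :=
        Finset.sum_le_sum_of_subset_of_nonneg (Finset.range_mono (Nat.le_add_left N (k + 1)))
          fun _ _ _ => reexpansionMajorant_nonneg _ _
    _ ≤ 4 * (harmonic k : ℝ) + 2 * (harmonic k : ℝ) := by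
        rw [Finset.sum_range_add]
        exact add_le_add (sum_range_succ_reexpansionMajorant_le k)
          (sum_range_reexpansionMajorant_add_one_add_le k N)
    _ ≤ 18 * log ((k : ℝ) + 1) := by linarith [harmonic_le_three_mul_log_add_one_s15 hk]

lemma summable_reexpansionMajorant {k : ℕ} (hk : k ≠ 0) : Summable (reexpansionMajorant k) :=
  summable_of_sum_range_le (reexpansionMajorant_nonneg k) (sum_range_reexpansionMajorant_le hk)

lemma tsum_reexpansionMajorant_le {k : ℕ} (hk : k ≠ 0) :
    ∑' m, reexpansionMajorant k m ≤ 18 * log ((k : ℝ) + 1) :=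
  Real.tsum_le_of_sum_range_le (reexpansionMajorant_nonneg k) (sum_range_reexpansionMajorant_le hk)

end HalfRange

section Reexpansion

open Real

variable {ι E : Type*} [Fintype ι] [NormedAddCommGroup E]

lemma summable_norm_of_summable_norm_mul_prod_log {a : (ι → ℕ+) → E}
    (ha : Summable fun k => ‖a k‖ * ∏ j, log ((k j : ℝ) + 1)) : Summable fun k => ‖a k‖ := by
  refine (ha.mul_left (2 ^ Fintype.card ι)).of_nonneg_of_le (fun _ => norm_nonneg _) fun k => ?_
  have hlog : (1 / 2 : ℝ) ^ Fintype.card ι ≤ ∏ j, log ((k j : ℝ) + 1) := by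
    simpa using Finset.prod_le_prod (s := Finset.univ) (fun _ _ => one_half_pos.le)
      fun j _ => half_le_log_natCast_add_one (k j).ne_zero
  calc ‖a k‖ = 2 ^ Fintype.card ι * (‖a k‖ * (1 / 2 : ℝ) ^ Fintype.card ι) := by
        rw [mul_left_comm, ← mul_pow]; norm_num
    _ ≤ 2 ^ Fintype.card ι * (‖a k‖ * ∏ j, log ((k j : ℝ) + 1)) := by gcongr

lemma summable_norm_mul_prod_reexpansionMajorant {a : (ι → ℕ+) → E}
    (ha : Summable fun k => ‖a k‖ * ∏ j, log ((k j : ℝ) + 1)) :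
    Summable fun p : (ι → ℕ+) × (ι → ℕ+) =>
      ‖a p.1‖ * ∏ j, reexpansionMajorant (p.1 j) (p.2 j) := by
  refine summable_mul_prod_kernel (K := fun (_ : ι) (k m : ℕ+) => reexpansionMajorant k m)
    (L := fun _ k => 18 * log ((k : ℝ) + 1)) (fun _ => norm_nonneg _)
    (fun _ _ _ => reexpansionMajorant_nonneg _ _)
    (fun _ k => (summable_reexpansionMajorant k.ne_zero).comp_injective PNat.coe_injective)
    (fun _ k => ?_) ?_
  · exact (tsum_comp_le_tsum_of_inj (summable_reexpansionMajorant k.ne_zero)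
      (reexpansionMajorant_nonneg _) PNat.coe_injective).trans
      (tsum_reexpansionMajorant_le k.ne_zero)
  · simpa only [Finset.prod_mul_distrib, mul_left_comm] using
      ha.mul_left (∏ _j : ι, (18 : ℝ))

variable [NormedSpace ℝ E]

lemma prod_halfRange_smul_eq_prod_endpointWeight_smul {f : (ι → ℝ) → E}
    (hface : ∀ x, (∃ j, x j = 0 ∨ x j = π) → f x = 0) (η : ι → Bool) (m : ι → ℕ) (x : ι → ℝ) :
    (∏ j, halfRange (!η j) (m j) (x j)) • f x = (∏ j, endpointWeight (η j) (m j) (x j)) • f x := by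
  by_cases hx : ∃ j, x j = 0 ∨ x j = π
  · simp only [hface x hx, smul_zero]
  · push Not at hx
    simp only [endpointWeight_of_ne (hx _).1 (hx _).2]

lemma setIntegral_prod_halfRange_smul_eq {f : (ι → ℝ) → E}
    (hface : ∀ x, (∃ j, x j = 0 ∨ x j = π) → f x = 0) (η : ι → Bool) (m : ι → ℕ) :
    ∫ x in Set.Icc 0 fun _ => π, (∏ j, halfRange (!η j) (m j) (x j)) • f x =
      ∫ x, (∏ j, endpointWeight (η j) (m j) (x j)) • f x
        ∂Measure.pi fun _ => endpointMeasure 0 π := by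
  simp only [prod_halfRange_smul_eq_prod_endpointWeight_smul hface]
  exact setIntegral_Icc_eq_integral_pi_endpointMeasure fun x hx => by rw [hface x hx, smul_zero]

variable [CompleteSpace E]

lemma hasSum_setIntegral_prod_halfRange_smul {η : ι → Bool} {a : (ι → ℕ+) → E}
    (ha : Summable fun k => ‖a k‖) {f : (ι → ℝ) → E}
    (hf : ∀ x, f x = ∑' k, (∏ j, halfRange (η j) (k j) (x j)) • a k)
    (hface : ∀ x, (∃ j, x j = 0 ∨ x j = π) → f x = 0) (m : ι → ℕ) :
    HasSum (fun k => (∏ j, ∫ t, halfRange (η j) (k j) t * endpointWeight (η j) (m j) t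
        ∂endpointMeasure 0 π) • a k)
      (∫ x in Set.Icc 0 fun _ => π, (∏ j, halfRange (!η j) (m j) (x j)) • f x) := by
  have hsmul (x : ι → ℝ) : (∏ j, endpointWeight (η j) (m j) (x j)) • f x =
      ∑' k, (∏ j, halfRange (η j) (k j) (x j) * endpointWeight (η j) (m j) (x j)) • a k := by
    simp only [hf, Finset.prod_mul_distrib, mul_comm, mul_smul, tsum_const_smul'']
  rw [setIntegral_prod_halfRange_smul_eq hface]
  simp only [hsmul]
  refine hasSum_integral_pi_prod_smul
    (g := fun (k : ι → ℕ+) j t => halfRange (η j) (k j) t * endpointWeight (η j) (m j) t)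
    (fun k j => integrable_endpointMeasure (integrableOn_halfRange_mul_endpointWeight _ _ _)) ?_
  refine (ha.mul_left (∏ _j : ι, (endpointMeasure 0 π).real Set.univ)).of_nonneg_of_le
    (fun k => by positivity) fun k => ?_
  gcongr
  exact integral_norm_halfRange_mul_endpointWeight_le _ _ _

theorem stmt_15_general (η : ι → Bool) (a : (ι → ℕ+) → E)
    (ha : Summable fun k => ‖a k‖ * ∏ j, log ((k j : ℝ) + 1)) (f : (ι → ℝ) → E)
    (hf : ∀ x, f x = ∑' k, (∏ j, halfRange (η j) (k j) (x j)) • a k)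
    (hface : ∀ x, (∃ j, x j = 0 ∨ x j = π) → f x = 0) :
    Summable fun m : ι → ℕ+ =>
      ‖∫ x in Set.Icc 0 fun _ => π, (∏ j, halfRange (!η j) (m j) (x j)) • f x‖ := by
  have hmaj := (summable_norm_mul_prod_reexpansionMajorant ha).prod_symm
  refine hmaj.prod.of_nonneg_of_le (fun _ => norm_nonneg _) fun m => ?_
  rw [← (hasSum_setIntegral_prod_halfRange_smul (summable_norm_of_summable_norm_mul_prod_log ha)
    hf hface fun j => m j).tsum_eq]
  have hrow : Summable fun k => ‖a k‖ * ∏ j, reexpansionMajorant (k j) (m j) := hmaj.prod_factor m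
  refine tsum_of_norm_bounded hrow.hasSum fun k => ?_
  rw [norm_smul, norm_prod, mul_comm]
  gcongr
  exact abs_integral_halfRange_mul_endpointWeight_le _ _ (m _).ne_zero

end Reexpansion

/-- multidimensional logarithmic sufficient condition: if
`Σ_k |a_k| ∏_j log(k_j+1) < ∞` and `f` vanishes on every face of the cube,
then the re-expansion coefficients are absolutely summable. -/
theorem stmt_15 (d : ℕ) (hd : 1 ≤ d) (η : Fin d → Bool) (a : (Fin d → ℕ) → ℂ)
    (ha : Summable fun k : Fin d → ℕ =>
      if ∀ j, 1 ≤ k j then ‖a k‖ * ∏ j, Real.log ((k j : ℝ) + 1) else 0)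
    (f : (Fin d → ℝ) → ℂ)
    (hf : ∀ x : Fin d → ℝ, f x = ∑' k : Fin d → ℕ, if ∀ j, 1 ≤ k j then
      a k * ∏ j, (if η j then (Real.cos ((k j : ℝ) * x j) : ℂ)
                  else (Real.sin ((k j : ℝ) * x j) : ℂ)) else 0)
    (hface : ∀ x : Fin d → ℝ, (∃ j : Fin d, x j = 0 ∨ x j = Real.pi) → f x = 0)
    (b : (Fin d → ℕ) → ℂ)
    (hb : ∀ m : Fin d → ℕ, (∀ j, 1 ≤ m j) →
      b m = ((2 / Real.pi : ℝ) : ℂ) ^ d *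
        ∫ x in Set.Icc (0 : Fin d → ℝ) (fun _ => Real.pi),
          f x * ∏ j, (if η j then (Real.sin ((m j : ℝ) * x j) : ℂ)
                      else (Real.cos ((m j : ℝ) * x j) : ℂ))) :
    Summable fun m : Fin d → ℕ => if ∀ j, 1 ≤ m j then ‖b m‖ else 0 := by
  rw [summable_ite_one_le_iff] at ha ⊢
  simp only [tsum_ite_one_le] at hf
  have hsum := stmt_15_general η (fun k => a fun j => k j) ha f (fun x => by
    simp [hf, halfRange, apply_ite, mul_comm]) hface
  refine (hsum.mul_left ((2 / Real.pi) ^ d)).congr fun m => ?_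
  rw [hb (fun j => m j) fun j => (m j).pos]
  simp [halfRange_not, apply_ite, mul_comm, abs_of_pos Real.pi_pos]
end
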